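/- Let E M_u (the operator f ↦ E(u f)) be bounded on L²(Σ). Then: (1) if E M_u is centered, then |E(u)|² = E(|u|²) μ-a.e. on S(E(u)); and (2) if |E(u)|² = E(|u|²) μ-a.e., then E M_u is centered. -/

import Mathlib

/-!
Write `E f = μ[f | m]`, `w = E u` and `v = E(|u|²)`. The adjoint of `T f = E(u f)` is
`T* g = ū E(g)`, so that `T T* f = v E(f)` and `T* T f = ū E(u f)`.

Necessity: evaluating `(T*T)(TT*) = (TT*)(T*T)` on indicators of sets `A ∈ m` of finite measure
gives `ū w v = v |w|²`, so `u = w` on the `m`-measurable set `{w ≠ 0} ∩ {v ≠ 0}`. The conditional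
variance identity `E(|u - w|²) = v - |w|²` then yields `|w|² = v` on this set, and `|w|² ≤ v = 0`
where `v = 0`.

Sufficiency: if `|w|² = v`, the same identity gives `u = w` almost everywhere. Then
`T*T f = |u|² E(f) = TT* f`, first for indicators of sets of finite measure and then, by density,
for all `f`. Thus `T` is normal, and normal operators are centered.

In infinite measure an element of `L²` need not be integrable, and `μ[f | m]` is then the junk
value `0`. The formula for `T*` is therefore proved with the `L²` projection `condExpL2`
(`adjoint_ae_eq`), and specialised to `m`-measurable and to integrable functions.
-/


open MeasureTheory ComplexConjugate

/-- A bounded operator `A` on a Hilbert space is *centered* if the family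
`{A*ⁿ Aⁿ, Aᵏ A*ᵏ : n, k ≥ 0}` consists of mutually commuting operators. -/
def Centered {H : Type*} [NormedAddCommGroup H] [InnerProductSpace ℂ H] [CompleteSpace H]
    (A : H →L[ℂ] H) : Prop :=
  ∀ B ∈ {B : H →L[ℂ] H | ∃ n : ℕ,
      B = (ContinuousLinearMap.adjoint A) ^ n * A ^ n ∨
      B = A ^ n * (ContinuousLinearMap.adjoint A) ^ n},
    ∀ C ∈ {C : H →L[ℂ] H | ∃ k : ℕ,
      C = (ContinuousLinearMap.adjoint A) ^ k * A ^ k ∨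
      C = A ^ k * (ContinuousLinearMap.adjoint A) ^ k},
      Commute B C

open scoped InnerProductSpace

/-! ### Normal operators -/

/-- A bounded operator commuting with its adjoint is centered. -/
lemma centered_of_commute_adjoint {H : Type*} [NormedAddCommGroup H] [InnerProductSpace ℂ H]
    [CompleteSpace H] {A : H →L[ℂ] H} (h : Commute (ContinuousLinearMap.adjoint A) A) :
    Centered A := by
  have hs : Commute A (ContinuousLinearMap.adjoint A) := h.symm
  have key : ∀ a b c d : ℕ, Commute ((ContinuousLinearMap.adjoint A) ^ a * A ^ b)
      ((ContinuousLinearMap.adjoint A) ^ c * A ^ d) := fun a b c d =>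
    (((Commute.refl _).pow_pow a c).mul_right (h.pow_pow a d)).mul_left
      ((hs.pow_pow b c).mul_right ((Commute.refl _).pow_pow b d))
  rintro B ⟨n, rfl | rfl⟩ C ⟨k, rfl | rfl⟩
  · exact key ..
  · rw [(hs.pow_pow k k).eq]; exact key ..
  · rw [(hs.pow_pow n n).eq]; exact key ..
  · rw [(hs.pow_pow k k).eq, (hs.pow_pow n n).eq]; exact key ..

/-! ### Complex-valued conditional expectations -/

/-- Complex-valued pull-out property of the conditional expectation. -/
lemma condExp_mul_right {X : Type*} {m m0 : MeasurableSpace X} {μ : Measure X}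
    {f g : X → ℂ} (hg : AEStronglyMeasurable[m] g μ)
    (hf : Integrable f μ) (hfg : Integrable (fun x => f x * g x) μ) :
    μ[fun x => f x * g x | m] =ᵐ[μ] fun x => (μ[f | m]) x * g x :=
  condExp_bilin_of_aestronglyMeasurable_right (ContinuousLinearMap.mul ℝ ℂ) hg hfg hf

lemma condExp_conj {X : Type*} {m m0 : MeasurableSpace X} {μ : Measure X}
    {f : X → ℂ} (hf : Integrable f μ) :
    μ[fun x => conj (f x) | m] =ᵐ[μ] fun x => conj ((μ[f | m]) x) :=
  (ContinuousLinearMap.comp_condExp_comm hf (Complex.conjCLE : ℂ →L[ℝ] ℂ)).symm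

lemma condExp_ofReal {X : Type*} {m m0 : MeasurableSpace X} {μ : Measure X}
    {f : X → ℝ} (hf : Integrable f μ) :
    μ[fun x => (f x : ℂ) | m] =ᵐ[μ] fun x => (((μ[f | m]) x : ℝ) : ℂ) :=
  (ContinuousLinearMap.comp_condExp_comm hf Complex.ofRealCLM).symm

lemma memLp_two_of_integrable {X : Type*} {m0 : MeasurableSpace X} {μ : Measure X}
    {u : X → ℂ} (hui : Integrable u μ) (hu2 : Integrable (fun x => ‖u x‖ ^ 2) μ) :
    MemLp u 2 μ :=
  (memLp_two_iff_integrable_sq_norm hui.1).2 hu2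

/-! ### The operator and its adjoint -/

/-- If `E g = h`, then the adjoint of `f ↦ E(u f)` sends `g` to `ū h`. The expectation `E g` is
taken in the `L²` sense, since `g` need not be integrable. -/
lemma adjoint_ae_eq {X : Type*} {m m0 : MeasurableSpace X} {μ : Measure X}
    [SigmaFinite μ] (hm : m ≤ m0) [SigmaFinite (μ.trim hm)]
    {u : X → ℂ} (hui : Integrable u μ) (hu2 : Integrable (fun x => ‖u x‖ ^ 2) μ)
    {T : Lp ℂ 2 μ →L[ℂ] Lp ℂ 2 μ}
    (hT : ∀ f : Lp ℂ 2 μ, ⇑(T f) =ᵐ[μ] μ[fun y => u y * f y | m])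
    {g : Lp ℂ 2 μ} {h : X → ℂ} (hgh : (condExpL2 ℂ ℂ hm g : X → ℂ) =ᵐ[μ] h) :
    ⇑((ContinuousLinearMap.adjoint T) g) =ᵐ[μ] fun x => conj (u x) * h x := by
  have hh2 : MemLp h 2 μ := (memLp_congr_ae hgh).1 (Lp.memLp _)
  have hhm : AEStronglyMeasurable[m] h μ :=
    (aestronglyMeasurable_condExpL2 hm g).congr hgh
  have hcu : MemLp (fun x => conj (u x)) 2 μ := (memLp_two_of_integrable hui hu2).star
  have huh : Integrable (fun x => conj (u x) * h x) μ := hcu.integrable_mul hh2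
  refine ae_eq_of_forall_setIntegral_eq_of_sigmaFinite
    (fun s _ hs => integrableOn_Lp_of_measure_ne_top _ fact_one_le_two_ennreal.elim hs.ne)
    (fun s _ _ => huh.integrableOn) (fun s hs hμs => ?_)
  set e : Lp ℂ 2 μ := indicatorConstLp 2 hs hμs.ne (1 : ℂ) with he
  have hue : (fun y => u y * e y) =ᵐ[μ] s.indicator u := by
    filter_upwards [indicatorConstLp_coeFn (p := 2) (hs := hs) (hμs := hμs.ne) (c := (1 : ℂ))]
      with x hx
    by_cases hxs : x ∈ s <;> simp [he, hx, hxs]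
  have hTe : ⇑(T e) =ᵐ[μ] μ[s.indicator u | m] := (hT e).trans (condExp_congr_ae hue)
  have hTem : AEStronglyMeasurable[m] (T e) μ :=
    stronglyMeasurable_condExp.aestronglyMeasurable.congr hTe.symm
  have hsu : Integrable (s.indicator u) μ := hui.indicator hs
  have hcsu : Integrable (fun x => conj (s.indicator u x)) μ := by
    have := (ContinuousLinearMap.integrable_comp (Complex.conjCLE : ℂ →L[ℝ] ℂ) hsu)
    exact this
  have hind : (fun x => conj (s.indicator u x) * h x) = s.indicator fun x => conj (u x) * h x := by
    ext x
    by_cases hxs : x ∈ s <;> simp [hxs]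
  have hcsuh : Integrable (fun x => conj (s.indicator u x) * h x) μ := by
    rw [hind]; exact huh.indicator hs
  calc ∫ x in s, (ContinuousLinearMap.adjoint T g) x ∂μ
      = ⟪e, ContinuousLinearMap.adjoint T g⟫_ℂ := (L2.inner_indicatorConstLp_one hs hμs.ne _).symm
    _ = ⟪T e, g⟫_ℂ := ContinuousLinearMap.adjoint_inner_right ..
    _ = ⟪T e, (condExpL2 ℂ ℂ hm g : Lp ℂ 2 μ)⟫_ℂ := by
        rw [← inner_conj_symm, ← inner_condExpL2_eq_inner_fun hm g (T e) hTem, inner_conj_symm]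
    _ = ∫ x, (μ[fun x => conj (s.indicator u x) * h x | m]) x ∂μ := by
        rw [L2.inner_def]
        refine integral_congr_ae ?_
        filter_upwards [hTe, hgh, condExp_conj (m := m) hsu, condExp_mul_right hhm hcsu hcsuh]
          with x h1 h2 h3 h4
        rw [h4, h3, h1, h2, RCLike.inner_apply, mul_comm]
    _ = ∫ x in s, conj (u x) * h x ∂μ := by
        rw [integral_condExp hm, hind, integral_indicator hs]

lemma adjoint_ae_eq_of_aestronglyMeasurable {X : Type*} {m m0 : MeasurableSpace X} {μ : Measure X}
    [SigmaFinite μ] (hm : m ≤ m0) [SigmaFinite (μ.trim hm)]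
    {u : X → ℂ} (hui : Integrable u μ) (hu2 : Integrable (fun x => ‖u x‖ ^ 2) μ)
    {T : Lp ℂ 2 μ →L[ℂ] Lp ℂ 2 μ}
    (hT : ∀ f : Lp ℂ 2 μ, ⇑(T f) =ᵐ[μ] μ[fun y => u y * f y | m])
    {g : Lp ℂ 2 μ} (hg : AEStronglyMeasurable[m] g μ) :
    ⇑((ContinuousLinearMap.adjoint T) g) =ᵐ[μ] fun x => conj (u x) * g x := by
  refine adjoint_ae_eq hm hui hu2 hT (Filter.EventuallyEq.of_eq ?_)
  have : Fact (m ≤ m0) := ⟨hm⟩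
  have : ((condExpL2 ℂ ℂ hm g : lpMeas ℂ ℂ m 2 μ) : Lp ℂ 2 μ) = g :=
    Submodule.starProjection_eq_self_iff.2 (mem_lpMeas_iff_aestronglyMeasurable.2 hg)
  rw [this]

lemma adjoint_ae_eq_of_integrable {X : Type*} {m m0 : MeasurableSpace X} {μ : Measure X}
    [SigmaFinite μ] (hm : m ≤ m0) [SigmaFinite (μ.trim hm)]
    {u : X → ℂ} (hui : Integrable u μ) (hu2 : Integrable (fun x => ‖u x‖ ^ 2) μ)
    {T : Lp ℂ 2 μ →L[ℂ] Lp ℂ 2 μ}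
    (hT : ∀ f : Lp ℂ 2 μ, ⇑(T f) =ᵐ[μ] μ[fun y => u y * f y | m])
    {g : Lp ℂ 2 μ} (hg : Integrable g μ) :
    ⇑((ContinuousLinearMap.adjoint T) g) =ᵐ[μ] fun x => conj (u x) * (μ[g | m]) x := by
  refine adjoint_ae_eq hm hui hu2 hT ?_
  have := MemLp.condExpL2_ae_eq_condExp' (𝕜 := ℂ) hm hg (Lp.memLp g)
  rwa [Lp.toLp_coeFn] at this

lemma apply_ae_eq_of_aestronglyMeasurable {X : Type*} {m m0 : MeasurableSpace X} {μ : Measure X}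
    {u : X → ℂ} (hui : Integrable u μ)
    (hintu : ∀ f : Lp ℂ 2 μ, Integrable (fun x => u x * f x) μ)
    {T : Lp ℂ 2 μ →L[ℂ] Lp ℂ 2 μ}
    (hT : ∀ f : Lp ℂ 2 μ, ⇑(T f) =ᵐ[μ] μ[fun y => u y * f y | m])
    {g : Lp ℂ 2 μ} (hg : AEStronglyMeasurable[m] g μ) :
    ⇑(T g) =ᵐ[μ] fun x => (μ[u | m]) x * g x :=
  (hT g).trans (condExp_mul_right hg hui (hintu g))

/-- If `f = ū h` with `h` measurable for the smaller σ-algebra, then `E(u f) = E(|u|²) h`. -/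
lemma apply_ae_eq_of_conj_mul {X : Type*} {m m0 : MeasurableSpace X} {μ : Measure X}
    {u : X → ℂ} (hu2 : Integrable (fun x => ‖u x‖ ^ 2) μ)
    (hintu : ∀ f : Lp ℂ 2 μ, Integrable (fun x => u x * f x) μ)
    {T : Lp ℂ 2 μ →L[ℂ] Lp ℂ 2 μ}
    (hT : ∀ f : Lp ℂ 2 μ, ⇑(T f) =ᵐ[μ] μ[fun y => u y * f y | m])
    {f : Lp ℂ 2 μ} {h : X → ℂ} (hh : AEStronglyMeasurable[m] h μ)
    (hf : ⇑f =ᵐ[μ] fun x => conj (u x) * h x) :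
    ⇑(T f) =ᵐ[μ] fun x => (((μ[fun y => ‖u y‖ ^ 2 | m]) x : ℝ) : ℂ) * h x := by
  have huf : (fun x => u x * f x) =ᵐ[μ] fun x => ((‖u x‖ ^ 2 : ℝ) : ℂ) * h x := by
    filter_upwards [hf] with x hx
    rw [hx, ← mul_assoc, Complex.mul_conj']
    push_cast
    rfl
  have hu2' : Integrable (fun x => ((‖u x‖ ^ 2 : ℝ) : ℂ)) μ := hu2.ofReal
  filter_upwards [hT f, condExp_congr_ae (m := m) huf, condExp_ofReal (m := m) hu2,
    condExp_mul_right hh hu2' ((integrable_congr huf).1 (hintu f))] with x h1 h2 h3 h4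
  rw [h1, h2, h4, h3]

/-! ### Conditional variance -/

/-- The conditional variance identity `E(|u - E u|²) = E(|u|²) - |E u|²`. -/
lemma condExp_norm_sub_sq {X : Type*} {m m0 : MeasurableSpace X} {μ : Measure X}
    (hm : m ≤ m0) [SigmaFinite (μ.trim hm)]
    {u : X → ℂ} (hui : Integrable u μ) (hu2 : Integrable (fun x => ‖u x‖ ^ 2) μ) :
    Integrable (fun x => ‖u x - (μ[u | m]) x‖ ^ 2) μ ∧
    μ[fun x => ‖u x - (μ[u | m]) x‖ ^ 2 | m] =ᵐ[μ]
      fun x => (μ[fun y => ‖u y‖ ^ 2 | m]) x - ‖(μ[u | m]) x‖ ^ 2 := by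
  set w := μ[u | m] with hw
  have hu : MemLp u 2 μ := memLp_two_of_integrable hui hu2
  have hw2 : MemLp w 2 μ := MemLp.condExp (by norm_num) hu
  have hwm : StronglyMeasurable[m] w := stronglyMeasurable_condExp
  have hd : Integrable (fun x => ‖u x - w x‖ ^ 2) μ :=
    (memLp_two_iff_integrable_sq_norm (hu.sub hw2).1).1 (hu.sub hw2)
  refine ⟨hd, ?_⟩
  have hcwm : StronglyMeasurable[m] fun x => conj (w x) :=
    Complex.continuous_conj.comp_stronglyMeasurable hwm
  have hcu : Integrable (fun x => conj (u x)) μ :=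
    ContinuousLinearMap.integrable_comp (Complex.conjCLE : ℂ →L[ℝ] ℂ) hui
  have i1 : Integrable (fun x => u x * conj (w x)) μ := hu.integrable_mul hw2.star
  have i2 : Integrable (fun x => conj (u x) * w x) μ := hu.star.integrable_mul hw2
  have i3 : Integrable (fun x => w x * conj (w x)) μ := hw2.integrable_mul hw2.star
  have i4 : Integrable (fun x => ((‖u x‖ ^ 2 : ℝ) : ℂ)) μ := hu2.ofReal
  have e : (fun x => ((‖u x - w x‖ ^ 2 : ℝ) : ℂ)) =
      (((fun x => ((‖u x‖ ^ 2 : ℝ) : ℂ)) - fun x => u x * conj (w x))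
        - fun x => conj (u x) * w x) + fun x => w x * conj (w x) := by
    ext x
    simp only [Pi.add_apply, Pi.sub_apply]
    push_cast
    rw [← Complex.mul_conj', ← Complex.mul_conj', map_sub]
    ring
  have c1 := condExp_ofReal (m := m) hd
  have c2 := condExp_ofReal (m := m) hu2
  have c3 := condExp_mul_right hcwm.aestronglyMeasurable hui i1
  have c4 := condExp_mul_right hwm.aestronglyMeasurable hcu i2
  have c5 := condExp_conj (m := m) hui
  have c6 : μ[fun x => w x * conj (w x) | m] =ᵐ[μ] fun x => w x * conj (w x) := by
    exact Filter.EventuallyEq.of_eq (condExp_of_stronglyMeasurable hm (hwm.mul hcwm) i3)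
  rw [e] at c1
  filter_upwards [c1, c2, c3, c4, c5, c6, condExp_add ((i4.sub i1).sub i2) i3 m,
    condExp_sub (i4.sub i1) i2 m, condExp_sub i4 i1 m] with x h1 h2 h3 h4 h5 h6 h7 h8 h9
  rw [h7, Pi.add_apply, h8, Pi.sub_apply, h9, Pi.sub_apply, h2, h3, h4, h5, h6] at h1
  rw [← hw] at h1
  have := Complex.mul_conj' (w x)
  have h10 : (((μ[fun x => ‖u x - w x‖ ^ 2 | m]) x : ℝ) : ℂ)
      = (((μ[fun y => ‖u y‖ ^ 2 | m]) x - ‖w x‖ ^ 2 : ℝ) : ℂ) := by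
    rw [← h1]
    push_cast
    rw [← this]
    ring
  exact_mod_cast h10

/-! ### Commutation relations -/

/-- Evaluating `(T*T)(TT*) = (TT*)(T*T)` on indicators of sets of the smaller σ-algebra gives
`ū E(u) E(|u|²) = E(|u|²) |E(u)|²`. -/
lemma conj_mul_ae_eq_of_commute {X : Type*} {m m0 : MeasurableSpace X} {μ : Measure X}
    [SigmaFinite μ] (hm : m ≤ m0) [SigmaFinite (μ.trim hm)]
    {u : X → ℂ} (hui : Integrable u μ) (hu2 : Integrable (fun x => ‖u x‖ ^ 2) μ)
    (hintu : ∀ f : Lp ℂ 2 μ, Integrable (fun x => u x * f x) μ)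
    {T : Lp ℂ 2 μ →L[ℂ] Lp ℂ 2 μ}
    (hT : ∀ f : Lp ℂ 2 μ, ⇑(T f) =ᵐ[μ] μ[fun y => u y * f y | m])
    (hc : Commute (ContinuousLinearMap.adjoint T * T) (T * ContinuousLinearMap.adjoint T)) :
    ∀ᵐ x ∂μ, conj (u x) * ((μ[u | m]) x * (((μ[fun y => ‖u y‖ ^ 2 | m]) x : ℝ) : ℂ)) =
      (((μ[fun y => ‖u y‖ ^ 2 | m]) x : ℝ) : ℂ) * (conj ((μ[u | m]) x) * (μ[u | m]) x) := by
  have hTm : ∀ f, AEStronglyMeasurable[m] (T f) μ := fun f =>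
    stronglyMeasurable_condExp.aestronglyMeasurable.congr (hT f).symm
  have key : ∀ n, ∀ᵐ x ∂μ, x ∈ spanningSets (μ.trim hm) n →
      conj (u x) * ((μ[u | m]) x * (((μ[fun y => ‖u y‖ ^ 2 | m]) x : ℝ) : ℂ)) =
      (((μ[fun y => ‖u y‖ ^ 2 | m]) x : ℝ) : ℂ) * (conj ((μ[u | m]) x) * (μ[u | m]) x) := by
    intro n
    set A := spanningSets (μ.trim hm) n
    have hA : MeasurableSet[m] A := measurableSet_spanningSets _ n
    have hμA : μ A ≠ ⊤ := by
      have := measure_spanningSets_lt_top (μ.trim hm) n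
      rw [trim_measurableSet_eq hm hA] at this
      exact this.ne
    set f : Lp ℂ 2 μ := indicatorConstLp 2 (hm A hA) hμA (1 : ℂ) with hf
    have hfA : ⇑f =ᵐ[μ] A.indicator fun _ => (1 : ℂ) := indicatorConstLp_coeFn
    have hfm : AEStronglyMeasurable[m] f μ :=
      (stronglyMeasurable_const.indicator hA).aestronglyMeasurable.congr hfA.symm
    have a1 := adjoint_ae_eq_of_aestronglyMeasurable hm hui hu2 hT hfm
    have b1 := apply_ae_eq_of_conj_mul hu2 hintu hT hfm a1
    have c1 := apply_ae_eq_of_aestronglyMeasurable hui hintu hT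
      (hTm (ContinuousLinearMap.adjoint T f))
    have d1 := adjoint_ae_eq_of_aestronglyMeasurable hm hui hu2 hT
      (hTm (T (ContinuousLinearMap.adjoint T f)))
    have a2 := apply_ae_eq_of_aestronglyMeasurable hui hintu hT hfm
    have b2 := adjoint_ae_eq_of_aestronglyMeasurable hm hui hu2 hT (hTm f)
    have i2 : Integrable (fun x => conj (u x) * (T f) x) μ :=
      (memLp_two_of_integrable hui hu2).star.integrable_mul (Lp.memLp (T f))
    have hcu : Integrable (fun x => conj (u x)) μ :=
      ContinuousLinearMap.integrable_comp (Complex.conjCLE : ℂ →L[ℝ] ℂ) hui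
    have c2 := adjoint_ae_eq_of_integrable hm hui hu2 hT ((integrable_congr b2).2 i2)
    have d2 := apply_ae_eq_of_conj_mul hu2 hintu hT
      stronglyMeasurable_condExp.aestronglyMeasurable c2
    have e2 := (condExp_congr_ae (m := m) b2).trans (condExp_mul_right (hTm f) hcu i2)
    have hcomm : ContinuousLinearMap.adjoint T (T (T (ContinuousLinearMap.adjoint T f))) =
        T (ContinuousLinearMap.adjoint T (ContinuousLinearMap.adjoint T (T f))) :=
      congrArg (fun S : Lp ℂ 2 μ →L[ℂ] Lp ℂ 2 μ => S f) hc.eq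
    rw [hcomm] at d1
    filter_upwards [hfA, b1, c1, d1, a2, d2, e2, condExp_conj (m := m) hui]
      with x h1 h2 h3 h4 h5 h6 h7 h8 hx
    rw [h6, h7, h8, h5, h3, h2, h1, Set.indicator_of_mem hx] at h4
    simpa using h4.symm
  filter_upwards [ae_all_iff.2 key] with x hx
  exact hx _ (mem_spanningSetsIndex (μ.trim hm) x)

/-- If `u = E(u)` and `|E u|² = E(|u|²)`, then `T` is normal: both `T*T` and `TT*` are
`f ↦ |u|² E(f)`. -/
lemma commute_adjoint_of_ae_eq_condExp {X : Type*} {m m0 : MeasurableSpace X} {μ : Measure X}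
    [SigmaFinite μ] (hm : m ≤ m0) [SigmaFinite (μ.trim hm)]
    {u : X → ℂ} (hui : Integrable u μ) (hu2 : Integrable (fun x => ‖u x‖ ^ 2) μ)
    (hintu : ∀ f : Lp ℂ 2 μ, Integrable (fun x => u x * f x) μ)
    {T : Lp ℂ 2 μ →L[ℂ] Lp ℂ 2 μ}
    (hT : ∀ f : Lp ℂ 2 μ, ⇑(T f) =ᵐ[μ] μ[fun y => u y * f y | m])
    (hv : ∀ᵐ x ∂μ, ‖(μ[u | m]) x‖ ^ 2 = (μ[fun y => ‖u y‖ ^ 2 | m]) x)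
    (huw : u =ᵐ[μ] μ[u | m]) :
    Commute (ContinuousLinearMap.adjoint T) T := by
  have hTm : ∀ f, AEStronglyMeasurable[m] (T f) μ := fun f =>
    stronglyMeasurable_condExp.aestronglyMeasurable.congr (hT f).symm
  have hum : AEStronglyMeasurable[m] u μ :=
    stronglyMeasurable_condExp.aestronglyMeasurable.congr huw.symm
  refine ContinuousLinearMap.ext fun f => ?_
  change ContinuousLinearMap.adjoint T (T f) = T (ContinuousLinearMap.adjoint T f)
  -- Indicators are integrable as well as square integrable, so on them `E` is given by `condExp`.
  refine Lp.induction (by norm_num) (fun f : Lp ℂ 2 μ =>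
    ContinuousLinearMap.adjoint T (T f) = T (ContinuousLinearMap.adjoint T f)) ?_ ?_ ?_ f
  · intro c s hs hμs
    rw [Lp.simpleFunc.coe_indicatorConst]
    set g : Lp ℂ 2 μ := indicatorConstLp 2 hs hμs.ne c
    have hg : Integrable g μ := integrable_indicatorConstLp hs hμs.ne c
    have a1 := adjoint_ae_eq_of_aestronglyMeasurable hm hui hu2 hT (hTm g)
    have a2 := apply_ae_eq_of_conj_mul hu2 hintu hT
      stronglyMeasurable_condExp.aestronglyMeasurable
      (adjoint_ae_eq_of_integrable hm hui hu2 hT hg)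
    have i1 : Integrable (fun x => g x * u x) μ := by
      simpa only [mul_comm] using hintu g
    have a3 := condExp_mul_right hum hg i1
    have a4 := hT g
    simp_rw [mul_comm (u _)] at a4
    refine Lp.ext ?_
    filter_upwards [a1, a2, a3, a4, hv, huw] with x h1 h2 h3 h4 h5 h6
    rw [h1, h2, h4, h3, ← h5, ← h6]
    push_cast
    rw [← Complex.mul_conj']
    ring
  · intro f g hf hg _ h1 h2
    simp only [map_add, h1, h2]
  · exact isClosed_eq (by fun_prop) (by fun_prop)

/-! ### Necessity and sufficiency -/

lemma norm_sq_eq_of_centered {X : Type*} {m m0 : MeasurableSpace X} {μ : Measure X}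
    [SigmaFinite μ] (hm : m ≤ m0) [SigmaFinite (μ.trim hm)]
    {u : X → ℂ} (hui : Integrable u μ) (hu2 : Integrable (fun x => ‖u x‖ ^ 2) μ)
    (hintu : ∀ f : Lp ℂ 2 μ, Integrable (fun x => u x * f x) μ)
    {T : Lp ℂ 2 μ →L[ℂ] Lp ℂ 2 μ}
    (hT : ∀ f : Lp ℂ 2 μ, ⇑(T f) =ᵐ[μ] μ[fun y => u y * f y | m])
    (hc : Centered T) :
    ∀ᵐ x ∂μ, (μ[u | m]) x ≠ 0 →
      ‖(μ[u | m]) x‖ ^ 2 = (μ[fun y => ‖u y‖ ^ 2 | m]) x := by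
  obtain ⟨hd, hvar⟩ := condExp_norm_sub_sq hm hui hu2
  set w := μ[u | m] with hw
  set v := μ[fun y => ‖u y‖ ^ 2 | m] with hv
  have hd0 : ∀ x, 0 ≤ ‖u x - w x‖ ^ 2 := fun x => by positivity
  have hcomm := hc _ ⟨1, Or.inl rfl⟩ _ ⟨1, Or.inr rfl⟩
  simp only [pow_one] at hcomm
  have hmul := conj_mul_ae_eq_of_commute hm hui hu2 hintu hT hcomm
  -- `u = E(u)` on `D`, hence the conditional variance vanishes there.
  set D : Set X := {x | w x ≠ 0} ∩ {x | v x ≠ 0}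
  have hD : MeasurableSet[m] D := by
    refine MeasurableSet.inter ?_ ?_
    · exact (stronglyMeasurable_condExp.measurable (measurableSet_singleton (0 : ℂ))).compl
    · exact (stronglyMeasurable_condExp.measurable (measurableSet_singleton (0 : ℝ))).compl
  have hzero : D.indicator (fun x => ‖u x - w x‖ ^ 2) =ᵐ[μ] 0 := by
    filter_upwards [hmul] with x hx
    by_cases hxD : x ∈ D
    · rw [Set.indicator_of_mem hxD]
      have hwx : w x ≠ 0 := hxD.1
      have hvx : ((v x : ℝ) : ℂ) ≠ 0 := by exact_mod_cast hxD.2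
      have h1 : conj (u x) = conj (w x) := by
        apply mul_right_cancel₀ (mul_ne_zero hwx hvx)
        rw [hx]; ring
      have h2 : u x = w x := (starRingEnd ℂ).injective h1
      simp [h2]
    · rw [Set.indicator_of_notMem hxD]; rfl
  have hcz := (condExp_indicator hd hD).symm.trans (condExp_congr_ae (m := m) hzero)
  rw [condExp_zero] at hcz
  filter_upwards [hcz, hvar, condExp_nonneg (m := m) (Filter.Eventually.of_forall hd0)]
    with x h1 h2 h3 hwx
  by_cases hvx : v x = 0
  · rw [h2, hvx] at h3
    simp only [Pi.zero_apply] at h3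
    have := sq_nonneg ‖w x‖
    rw [hvx]; linarith
  · rw [Set.indicator_of_mem (show x ∈ D from ⟨hwx, hvx⟩), h2] at h1
    simp only [Pi.zero_apply] at h1
    linarith

lemma centered_of_norm_sq_eq {X : Type*} {m m0 : MeasurableSpace X} {μ : Measure X}
    [SigmaFinite μ] (hm : m ≤ m0) [SigmaFinite (μ.trim hm)]
    {u : X → ℂ} (hui : Integrable u μ) (hu2 : Integrable (fun x => ‖u x‖ ^ 2) μ)
    (hintu : ∀ f : Lp ℂ 2 μ, Integrable (fun x => u x * f x) μ)
    {T : Lp ℂ 2 μ →L[ℂ] Lp ℂ 2 μ}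
    (hT : ∀ f : Lp ℂ 2 μ, ⇑(T f) =ᵐ[μ] μ[fun y => u y * f y | m])
    (h : ∀ᵐ x ∂μ, ‖(μ[u | m]) x‖ ^ 2 = (μ[fun y => ‖u y‖ ^ 2 | m]) x) :
    Centered T := by
  obtain ⟨hd, hvar⟩ := condExp_norm_sub_sq hm hui hu2
  set w := μ[u | m] with hw
  set v := μ[fun y => ‖u y‖ ^ 2 | m] with hv
  have hd0 : ∀ x, 0 ≤ ‖u x - w x‖ ^ 2 := fun x => by positivity
  refine centered_of_commute_adjoint
    (commute_adjoint_of_ae_eq_condExp hm hui hu2 hintu hT h ?_)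
  have hz : ∫ x, ‖u x - w x‖ ^ 2 ∂μ = 0 := by
    rw [← integral_condExp hm]
    refine integral_eq_zero_of_ae ?_
    filter_upwards [hvar, h] with x h1 h2
    rw [h1, h2, sub_self]; rfl
  filter_upwards [(integral_eq_zero_iff_of_nonneg hd0 hd).1 hz] with x hx
  simpa [sub_eq_zero] using hx

/-- **Corollary 2.7.** For the bounded operator `T = E M_u` (`f ↦ E(u f)`) on `L²(Σ)`:
(1) if `T` is centered then `|E(u)|² = E(|u|²)` on `S(E(u))`;
(2) if `|E(u)|² = E(|u|²)` μ-a.e. then `T` is centered. -/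
theorem stmt_7 {X : Type*} [m0 : MeasurableSpace X] {μ : Measure X} [μ.IsComplete]
    [SigmaFinite μ] {m : MeasurableSpace X} (hm : m ≤ m0) [SigmaFinite (μ.trim hm)]
    (u : X → ℂ) (hu : AEMeasurable u μ)
    (hui : Integrable u μ) (hu2 : Integrable (fun x => ‖u x‖ ^ 2) μ)
    (hintu : ∀ f : Lp ℂ 2 μ, Integrable (fun x => u x * f x) μ)
    (T : Lp ℂ 2 μ →L[ℂ] Lp ℂ 2 μ)
    (hT : ∀ f : Lp ℂ 2 μ, ⇑(T f) =ᵐ[μ] μ[fun y => u y * f y | m]) :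
    (Centered T →
      ∀ᵐ x ∂μ, (μ[u | m]) x ≠ 0 →
        ‖(μ[u | m]) x‖ ^ 2 = (μ[fun y => ‖u y‖ ^ 2 | m]) x) ∧
    ((∀ᵐ x ∂μ, ‖(μ[u | m]) x‖ ^ 2 = (μ[fun y => ‖u y‖ ^ 2 | m]) x) →
      Centered T) := by
  exact ⟨norm_sq_eq_of_centered hm hui hu2 hintu hT, centered_of_norm_sq_eq hm hui hu2 hintu hT⟩
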